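/- Let i >= j, i + j >= k, and fix q, n. Then P_q^n(i,j,k) <= M_q^n(i) * 2 * sum over c from ceil((i+j-k)/2) to j of Q_q^n(i,j,c). -/

import Mathlib

/-!
On `ker (X - Y)` the matrices agree, so `X` maps it into `col X ∩ col Y` with kernel
`ker X ∩ ker Y`, the annihilator of `row X + row Y`. Rank–nullity and the dimension formula for
`row X + row Y` then give Marsaglia's bound, which forces one of `dim (col X ∩ col Y)`,
`dim (row X ∩ row Y)` to be at least `(i + j - k) / 2`. For fixed `X`, the union bound over these
two cases, the second one read through transposition, bounds the number of `Y`. Since the general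
linear group acts transitively on subspaces of a given dimension, this bound depends on `X` only
through its rank.
-/

open Module LinearMap
open scoped Matrix

section Marsaglia

theorem finrank_eqLocus_le {K V W : Type*} [DivisionRing K] [AddCommGroup V] [Module K V]
    [FiniteDimensional K V] [AddCommGroup W] [Module K W] (f g : V →ₗ[K] W) :
    finrank K (eqLocus f g) ≤ finrank K ↥(range f ⊓ range g) + finrank K ↥(ker f ⊓ ker g) := by
  have map_le : range (f.domRestrict (eqLocus f g)) ≤ range f ⊓ range g := by
    rintro _ ⟨⟨v, hv⟩, rfl⟩
    exact ⟨⟨v, rfl⟩, v, hv.symm⟩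
  have ker_le : (ker (f.domRestrict (eqLocus f g))).map (eqLocus f g).subtype ≤ ker f ⊓ ker g := by
    rintro _ ⟨⟨v, hv⟩, hfv : f v = 0, rfl⟩
    exact ⟨hfv, (hv : f v = g v).symm.trans hfv⟩
  calc finrank K (eqLocus f g)
      = finrank K (range (f.domRestrict (eqLocus f g))) +
          finrank K ((ker (f.domRestrict (eqLocus f g))).map (eqLocus f g).subtype) := by
        rw [Submodule.finrank_map_subtype_eq, finrank_range_add_finrank_ker]
    _ ≤ _ := add_le_add (Submodule.finrank_mono map_le) (Submodule.finrank_mono ker_le)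

/-- The column space of a matrix, as a subspace of the space of column vectors. The row space of
`A` is `colSpace Aᵀ`. -/
abbrev colSpace {R m n : Type*} [CommSemiring R] [Fintype n] (A : Matrix m n R) :
    Submodule R (m → R) :=
  range A.mulVecLin

theorem colSpace_fromCols {R m n₁ n₂ : Type*} [CommSemiring R] [Fintype n₁] [Fintype n₂]
    (A : Matrix m n₁ R) (B : Matrix m n₂ R) :
    colSpace (A.fromCols B) = colSpace A ⊔ colSpace B := by
  simp only [colSpace, Matrix.range_mulVecLin, ← Submodule.span_union, ← Set.Sum.elim_range]
  congr 2
  ext (_ | _) <;> rfl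

variable {K m n : Type*} [Field K] [Fintype m] [Fintype n]

theorem finrank_ker_inf_ker_add_finrank_colSpace_transpose_sup (X Y : Matrix m n K) :
    finrank K ↥(ker X.mulVecLin ⊓ ker Y.mulVecLin) + finrank K ↥(colSpace Xᵀ ⊔ colSpace Yᵀ) =
      Fintype.card n := by
  have ker_fromRows :
      ker (X.fromRows Y).mulVecLin = ker X.mulVecLin ⊓ ker Y.mulVecLin := by
    ext v
    simp [Matrix.fromRows_mulVec, ← Sum.elim_zero_zero, Sum.elim_eq_iff]
  rw [← ker_fromRows, ← colSpace_fromCols, ← Matrix.transpose_fromRows]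
  change _ + (X.fromRows Y)ᵀ.rank = _
  rw [Matrix.rank_transpose, Matrix.rank, add_comm, finrank_range_add_finrank_ker,
    finrank_fintype_fun_eq_card]

theorem rank_add_rank_le_rank_sub_add_finrank_inf (X Y : Matrix m n K) :
    X.rank + Y.rank ≤ (X - Y).rank + finrank K ↥(colSpace X ⊓ colSpace Y) +
      finrank K ↥(colSpace Xᵀ ⊓ colSpace Yᵀ) := by
  have row_dimension : finrank K ↥(colSpace Xᵀ ⊔ colSpace Yᵀ) +
      finrank K ↥(colSpace Xᵀ ⊓ colSpace Yᵀ) = X.rank + Y.rank := by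
    rw [Submodule.finrank_sup_add_finrank_inf_eq, ← X.rank_transpose, ← Y.rank_transpose]
    rfl
  have mulVecLin_sub : (X - Y).mulVecLin = X.mulVecLin - Y.mulVecLin :=
    LinearMap.ext fun v ↦ Matrix.sub_mulVec X Y v
  have rank_nullity : (X - Y).rank + finrank K (eqLocus X.mulVecLin Y.mulVecLin) =
      Fintype.card n := by
    rw [eqLocus_eq_ker_sub, ← mulVecLin_sub, Matrix.rank, finrank_range_add_finrank_ker,
      finrank_fintype_fun_eq_card]
  have codim_ker_inf := finrank_ker_inf_ker_add_finrank_colSpace_transpose_sup X Y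
  have eqLocus_le : _ ≤ finrank K ↥(colSpace X ⊓ colSpace Y) + _ :=
    finrank_eqLocus_le X.mulVecLin Y.mulVecLin
  omega

end Marsaglia

section Counting

theorem exists_linearEquiv_map_eq_of_finrank_eq {K E : Type*} [DivisionRing K] [AddCommGroup E]
    [Module K E] {U V : Submodule K E} [FiniteDimensional K U] [FiniteDimensional K V]
    (h : finrank K U = finrank K V) : ∃ e : E ≃ₗ[K] E, U.map (e : E →ₗ[K] E) = V := by
  let f := LinearEquiv.ofFinrankEq U V h
  obtain ⟨e, he⟩ := Submodule.exists_linearEquiv_restrict_eq f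
  refine ⟨e, le_antisymm ?_ fun y hy ↦ ?_⟩
  · rintro _ ⟨x, hx, rfl⟩
    exact he ⟨x, hx⟩ ▸ (f ⟨x, hx⟩).2
  · obtain ⟨x, hx⟩ := f.surjective ⟨y, hy⟩
    exact ⟨x, x.2, (he x).symm.trans (congrArg Subtype.val hx)⟩

theorem card_subtype_prod_le_card_mul {α β : Type*} [Finite α] [Finite β] {p : α → Prop}
    {r : α → β → Prop} {N : ℕ} (h : ∀ a, p a → Nat.card {b // r a b} ≤ N) :
    Nat.card {x : α × β // p x.1 ∧ r x.1 x.2} ≤ Nat.card {a // p a} * N := by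
  have := Fintype.ofFinite {a // p a}
  let fiberEquiv : {x : α × β // p x.1 ∧ r x.1 x.2} ≃ Σ a : {a // p a}, {b // r a b} :=
    ⟨fun x ↦ ⟨⟨x.1.1, x.2.1⟩, x.1.2, x.2.2⟩, fun x ↦ ⟨(x.1.1, x.2.1), x.1.2, x.2.2⟩,
      fun _ ↦ rfl, fun _ ↦ rfl⟩
  rw [Nat.card_congr fiberEquiv, Nat.card_sigma, Nat.card_eq_fintype_card (α := {a // p a})]
  exact Finset.sum_le_card_nsmul _ _ N fun a _ ↦ h a a.2

variable {K m n : Type*} [Field K] [Fintype n]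

/-- The paper's `Q_q^n(i, j, c)`, with an arbitrary subspace `U` in place of the column space of
the fixed matrix of rank `i`: the number of matrices of rank `j` whose column space meets `U` in
dimension `c`. The type `n` indexing the columns is explicit, as `U` does not determine it. -/
noncomputable def rankInterCount (n : Type*) [Fintype n] (U : Submodule K (m → K)) (j c : ℕ) : ℕ :=
  Nat.card {Y : Matrix m n K // Y.rank = j ∧ finrank K ↥(U ⊓ colSpace Y) = c}

theorem rankInterCount_eq_of_finrank_eq [Finite m] {U V : Submodule K (m → K)}
    (h : finrank K U = finrank K V) (j c : ℕ) :
    rankInterCount n U j c = rankInterCount n V j c := by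
  classical
  obtain ⟨e, map_U⟩ := exists_linearEquiv_map_eq_of_finrank_eq h
  let φ : Matrix m n K ≃ₗ[K] Matrix m n K :=
    Matrix.toLin' ≪≫ₗ LinearEquiv.congrRight e ≪≫ₗ LinearMap.toMatrix'
  have colSpace_φ (Y) : colSpace (φ Y) = (colSpace Y).map (e : (m → K) →ₗ[K] m → K) := by
    rw [← range_comp]
    exact congrArg range (Matrix.toLin'_toMatrix' _)
  refine Nat.card_congr (φ.toEquiv.subtypeEquiv fun Y ↦ ?_)
  change finrank K (colSpace Y) = j ∧ _ ↔ finrank K (colSpace (φ Y)) = j ∧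
    finrank K ↥(V ⊓ colSpace (φ Y)) = c
  rw [colSpace_φ, ← map_U, ← Submodule.map_inf _ e.injective, e.finrank_map_eq, e.finrank_map_eq]

theorem sum_Icc_rankInterCount [Finite K] [Finite m] (U : Submodule K (m → K)) (j c₀ : ℕ) :
    ∑ c ∈ Finset.Icc c₀ j, rankInterCount n U j c =
      Nat.card {Y : Matrix m n K // Y.rank = j ∧ c₀ ≤ finrank K ↥(U ⊓ colSpace Y)} := by
  classical
  have := Fintype.ofFinite (Matrix m n K)
  have inter_mem_Icc (Y : Matrix m n K) (hY : Y.rank = j ∧ c₀ ≤ finrank K ↥(U ⊓ colSpace Y)) :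
      finrank K ↥(U ⊓ colSpace Y) ∈ Finset.Icc c₀ j :=
    Finset.mem_Icc.2 ⟨hY.2, hY.1 ▸ Submodule.finrank_mono inf_le_right⟩
  simp only [rankInterCount, Nat.card_eq_fintype_card, Fintype.card_subtype]
  rw [Finset.card_eq_sum_card_fiberwise fun Y hY ↦ inter_mem_Icc Y (Finset.mem_filter.1 hY).2]
  refine Finset.sum_congr rfl fun c hc ↦ congrArg Finset.card ?_
  ext Y
  grind

variable [Fintype m] [Finite K] {i j k : ℕ}

theorem card_rank_sub_le_le_sum_rankInterCount (X : Matrix m n K) :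
    Nat.card {Y : Matrix m n K // Y.rank = j ∧ (X - Y).rank ≤ k} ≤
      ∑ c ∈ Finset.Icc ((X.rank + j - k + 1) / 2) j,
        (rankInterCount n (colSpace X) j c + rankInterCount m (colSpace Xᵀ) j c) := by
  set c₀ := (X.rank + j - k + 1) / 2
  have col_or_row (Y : Matrix m n K) (hY : Y.rank = j ∧ (X - Y).rank ≤ k) :
      (Y.rank = j ∧ c₀ ≤ finrank K ↥(colSpace X ⊓ colSpace Y)) ∨
        (Yᵀ.rank = j ∧ c₀ ≤ finrank K ↥(colSpace Xᵀ ⊓ colSpace Yᵀ)) := by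
    have := rank_add_rank_le_rank_sub_add_finrank_inf X Y
    rw [Y.rank_transpose]
    omega
  rw [Finset.sum_add_distrib, sum_Icc_rankInterCount, sum_Icc_rankInterCount,
    ← Nat.card_congr ((Matrix.transposeAddEquiv m n K).toEquiv.subtypeEquiv fun _ ↦ Iff.rfl)]
  exact (Nat.card_mono (Set.toFinite _) col_or_row).trans (Set.ncard_union_le _ _)

theorem P_le_M_mul_sum_Q_general (X₀ : Matrix m n K) (hX₀ : X₀.rank = i) :
    Nat.card {P : Matrix m n K × Matrix m n K //
        P.1.rank = i ∧ P.2.rank = j ∧ (P.1 - P.2).rank ≤ k} ≤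
      Nat.card {A : Matrix m n K // A.rank = i} *
        ∑ c ∈ Finset.Icc ((i + j - k + 1) / 2) j,
          (rankInterCount n (colSpace X₀) j c + rankInterCount m (colSpace X₀ᵀ) j c) := by
  refine card_subtype_prod_le_card_mul (p := fun X : Matrix m n K ↦ X.rank = i)
    (r := fun X Y ↦ Y.rank = j ∧ (X - Y).rank ≤ k) fun X hX ↦ ?_
  have row_rank : Xᵀ.rank = X₀ᵀ.rank := by
    rw [Matrix.rank_transpose, Matrix.rank_transpose, hX, hX₀]
  simpa only [hX, rankInterCount_eq_of_finrank_eq (hX.trans hX₀.symm),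
    rankInterCount_eq_of_finrank_eq row_rank]
    using card_rank_sub_le_le_sum_rankInterCount (j := j) (k := k) X

end Counting

/-- With `i ≥ j` and `i + j ≥ k`:
`P_q^n(i,j,k) ≤ M_q^n(i) · 2 · ∑_{c = ⌈(i+j-k)/2⌉}^{j} Q_q^n(i,j,c)`, where
`P_q^n(i,j,k)` counts pairs `(X,Y)` with `rank X = i`, `rank Y = j`,
`rank (X - Y) ≤ k`; `M_q^n(i)` counts matrices of rank `i`; and `Q_q^n(i,j,c)`
counts matrices `Y` of rank `j` with `dim (col X₀ ⊓ col Y) = c` for a fixed matrix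
`X₀` of rank `i` (this count is independent of the choice of `X₀`). -/
theorem P_le_M_mul_sum_Q {K : Type*} [Field K] [Fintype K] {n i j k : ℕ}
    (hji : j ≤ i) (hk : k ≤ i + j)
    (X₀ : Matrix (Fin n) (Fin n) K) (hX₀ : X₀.rank = i) :
    Nat.card {P : Matrix (Fin n) (Fin n) K × Matrix (Fin n) (Fin n) K //
        P.1.rank = i ∧ P.2.rank = j ∧ (P.1 - P.2).rank ≤ k} ≤
      Nat.card {A : Matrix (Fin n) (Fin n) K // A.rank = i} *
        (2 * ∑ c ∈ Finset.Icc ((i + j - k + 1) / 2) j,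
          Nat.card {Y : Matrix (Fin n) (Fin n) K // Y.rank = j ∧
            Module.finrank K
              ↥(LinearMap.range X₀.mulVecLin ⊓ LinearMap.range Y.mulVecLin) = c}) := by
  have h := P_le_M_mul_sum_Q_general (j := j) (k := k) X₀ hX₀
  simp only [rankInterCount_eq_of_finrank_eq X₀.rank_transpose, ← two_mul, ← Finset.mul_sum] at h
  exact h
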